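/- arXiv:2001.00514 — 10 statements merged into one kernel-verified Lean document; each statement's English description precedes it below -/
import Mathlib

section
/- McCormick's convex envelope theorem for a bilinear term: let ℓ₁ ≤ u₁ and ℓ₂ ≤ u₂ be real numbers and let R = [ℓ₁,u₁] × [ℓ₂,u₂] ⊆ ℝ². Define g(x₁,x₂) = max(u₂x₁ + u₁x₂ − u₁u₂, ℓ₂x₁ + ℓ₁x₂ − ℓ₁ℓ₂). Then g is convex on R, g(x₁,x₂) ≤ x₁·x₂ for all (x₁,x₂) ∈ R, and for every function h : ℝ² → ℝ that is convex on R and satisfies h(x₁,x₂) ≤ x₁·x₂ for all (x₁,x₂) ∈ R, one has h(x₁,x₂) ≤ g(x₁,x₂) for all (x₁,x₂) ∈ R; that is, g is the convex envelope of the bilinear function (x₁,x₂) ↦ x₁·x₂ on R. -/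
/-- The Jensen inequality for three points. -/
theorem convexOn_three {S : Set (ℝ × ℝ)} {h : ℝ × ℝ → ℝ} (hh : ConvexOn ℝ S h)
    {x y z : ℝ × ℝ} (hx : x ∈ S) (hy : y ∈ S) (hz : z ∈ S) {a b c : ℝ}
    (ha : 0 ≤ a) (hb : 0 ≤ b) (hc : 0 ≤ c) (habc : a + b + c = 1) :
    h (a • x + b • y + c • z) ≤ a * h x + b * h y + c * h z := by
  have := hh.map_sum_le (t := Finset.univ) (w := ![a, b, c]) (p := ![x, y, z])
    (by intro i _; fin_cases i <;> simpa)
    (by simpa [Fin.sum_univ_three] using habc)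
    (by intro i _; fin_cases i <;> simpa)
  simpa [Fin.sum_univ_three] using this

/-- Every point of an interval is a convex combination of its endpoints. -/
theorem exists_param {l u x : ℝ} (h1 : l ≤ x) (h2 : x ≤ u) :
    ∃ s : ℝ, 0 ≤ s ∧ s ≤ 1 ∧ x = l + s * (u - l) := by
  rcases eq_or_lt_of_le (h1.trans h2) with h | h
  · exact ⟨0, le_rfl, zero_le_one, by linarith⟩
  · have h' : 0 < u - l := by linarith
    refine ⟨(x - l) / (u - l), div_nonneg (by linarith) h'.le,
      (div_le_one h').2 (by linarith), ?_⟩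
    field_simp
    ring

/-- McCormick's convex envelope theorem for a bilinear term: the pointwise maximum of the
two under-estimators is the convex envelope of `(x₁, x₂) ↦ x₁ * x₂` on the box
`[l₁, u₁] × [l₂, u₂]`. -/
theorem mccormick_convex_envelope (l₁ u₁ l₂ u₂ : ℝ) (h₁ : l₁ ≤ u₁) (h₂ : l₂ ≤ u₂) :
    ConvexOn ℝ (Set.Icc l₁ u₁ ×ˢ Set.Icc l₂ u₂)
      (fun p : ℝ × ℝ =>
        max (u₂ * p.1 + u₁ * p.2 - u₁ * u₂) (l₂ * p.1 + l₁ * p.2 - l₁ * l₂)) ∧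
    (∀ p ∈ Set.Icc l₁ u₁ ×ˢ Set.Icc l₂ u₂,
      max (u₂ * p.1 + u₁ * p.2 - u₁ * u₂) (l₂ * p.1 + l₁ * p.2 - l₁ * l₂) ≤ p.1 * p.2) ∧
    (∀ h : ℝ × ℝ → ℝ, ConvexOn ℝ (Set.Icc l₁ u₁ ×ˢ Set.Icc l₂ u₂) h →
      (∀ p ∈ Set.Icc l₁ u₁ ×ˢ Set.Icc l₂ u₂, h p ≤ p.1 * p.2) →
      ∀ p ∈ Set.Icc l₁ u₁ ×ˢ Set.Icc l₂ u₂,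
        h p ≤ max (u₂ * p.1 + u₁ * p.2 - u₁ * u₂) (l₂ * p.1 + l₁ * p.2 - l₁ * l₂)) := by
  refine ⟨?_, ?_, ?_⟩
  · have hS : Convex ℝ (Set.Icc l₁ u₁ ×ˢ Set.Icc l₂ u₂) :=
      (convex_Icc l₁ u₁).prod (convex_Icc l₂ u₂)
    have aff : ∀ a b c : ℝ, ConvexOn ℝ (Set.Icc l₁ u₁ ×ˢ Set.Icc l₂ u₂)
        (fun p : ℝ × ℝ => a * p.1 + b * p.2 - c) := by
      intro a b c
      refine ⟨hS, ?_⟩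
      intro x _ y _ s t _ _ hst
      obtain rfl : t = 1 - s := by linarith
      simp only [Prod.fst_add, Prod.snd_add, Prod.smul_fst, Prod.smul_snd, smul_eq_mul]
      apply le_of_eq
      ring
    exact (aff u₂ u₁ (u₁ * u₂)).sup (aff l₂ l₁ (l₁ * l₂))
  · rintro ⟨x, y⟩ ⟨⟨hx1, hx2⟩, hy1, hy2⟩
    dsimp only at *
    apply max_le
    · nlinarith [mul_nonneg (sub_nonneg.2 hx2) (sub_nonneg.2 hy2)]
    · nlinarith [mul_nonneg (sub_nonneg.2 hx1) (sub_nonneg.2 hy1)]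
  · rintro h hh hle ⟨x, y⟩ ⟨⟨hx1, hx2⟩, hy1, hy2⟩
    dsimp only at *
    obtain ⟨s, hs0, hs1, rfl⟩ := exists_param hx1 hx2
    obtain ⟨t, ht0, ht1, rfl⟩ := exists_param hy1 hy2
    have mll : (l₁, l₂) ∈ Set.Icc l₁ u₁ ×ˢ Set.Icc l₂ u₂ := ⟨⟨le_rfl, h₁⟩, le_rfl, h₂⟩
    have mem_ul : (u₁, l₂) ∈ Set.Icc l₁ u₁ ×ˢ Set.Icc l₂ u₂ := ⟨⟨h₁, le_rfl⟩, le_rfl, h₂⟩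
    have mlu : (l₁, u₂) ∈ Set.Icc l₁ u₁ ×ˢ Set.Icc l₂ u₂ := ⟨⟨le_rfl, h₁⟩, h₂, le_rfl⟩
    have muu : (u₁, u₂) ∈ Set.Icc l₁ u₁ ×ˢ Set.Icc l₂ u₂ := ⟨⟨h₁, le_rfl⟩, h₂, le_rfl⟩
    have eul := hle _ mem_ul
    have elu := hle _ mlu
    dsimp only at eul elu
    rcases le_total (s + t) 1 with hst | hst
    · refine le_trans ?_ (le_max_right _ _)
      have ell := hle _ mll
      dsimp only at ell
      have key := convexOn_three hh mll mem_ul mlu (a := 1 - s - t) (b := s) (c := t)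
        (by linarith) hs0 ht0 (by ring)
      have e : (1 - s - t) • (l₁, l₂) + s • (u₁, l₂) + t • (l₁, u₂)
          = (l₁ + s * (u₁ - l₁), l₂ + t * (u₂ - l₂)) := by
        ext <;> simp <;> ring
      rw [e] at key
      have k1 := mul_le_mul_of_nonneg_left ell (by linarith : 0 ≤ 1 - s - t)
      have k2 := mul_le_mul_of_nonneg_left eul hs0
      have k3 := mul_le_mul_of_nonneg_left elu ht0
      linarith
    · refine le_trans ?_ (le_max_left _ _)
      have euu := hle _ muu
      dsimp only at euu
      have key := convexOn_three hh muu mem_ul mlu (a := s + t - 1) (b := 1 - t) (c := 1 - s)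
        (by linarith) (by linarith) (by linarith) (by ring)
      have e : (s + t - 1) • (u₁, u₂) + (1 - t) • (u₁, l₂) + (1 - s) • (l₁, u₂)
          = (l₁ + s * (u₁ - l₁), l₂ + t * (u₂ - l₂)) := by
        ext <;> simp <;> ring
      rw [e] at key
      have k1 := mul_le_mul_of_nonneg_left euu (by linarith : 0 ≤ s + t - 1)
      have k2 := mul_le_mul_of_nonneg_left eul (by linarith : 0 ≤ 1 - t)
      have k3 := mul_le_mul_of_nonneg_left elu (by linarith : 0 ≤ 1 - s)
      linarith
end

section
/- The McCormick relaxation defines the convex hull of a bilinear term: let ℓ₁ ≤ u₁ and ℓ₂ ≤ u₂ be real numbers. Then the polytope M = {(x₁,x₂,w) ∈ ℝ³ : ℓ₁ ≤ x₁ ≤ u₁, ℓ₂ ≤ x₂ ≤ u₂, w ≥ u₂x₁ + u₁x₂ − u₁u₂, w ≥ ℓ₂x₁ + ℓ₁x₂ − ℓ₁ℓ₂, w ≤ u₂x₁ + ℓ₁x₂ − ℓ₁u₂, w ≤ ℓ₂x₁ + u₁x₂ − u₁ℓ₂} equals the convex hull (over ℝ) of the set X = {(x₁,x₂,x₁·x₂)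 : ℓ₁ ≤ x₁ ≤ u₁, ℓ₂ ≤ x₂ ≤ u₂}. -/
/-- The McCormick relaxation polytope equals the convex hull of the graph of a bilinear
term over the box `[l₁, u₁] × [l₂, u₂]`. -/
theorem mccormick_eq_convexHull_graph (l₁ u₁ l₂ u₂ : ℝ) (h₁ : l₁ ≤ u₁) (h₂ : l₂ ≤ u₂) :
    {p : ℝ × ℝ × ℝ | l₁ ≤ p.1 ∧ p.1 ≤ u₁ ∧ l₂ ≤ p.2.1 ∧ p.2.1 ≤ u₂ ∧
      u₂ * p.1 + u₁ * p.2.1 - u₁ * u₂ ≤ p.2.2 ∧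
      l₂ * p.1 + l₁ * p.2.1 - l₁ * l₂ ≤ p.2.2 ∧
      p.2.2 ≤ u₂ * p.1 + l₁ * p.2.1 - l₁ * u₂ ∧
      p.2.2 ≤ l₂ * p.1 + u₁ * p.2.1 - u₁ * l₂} =
    convexHull ℝ {p : ℝ × ℝ × ℝ | ∃ x₁ x₂ : ℝ,
      l₁ ≤ x₁ ∧ x₁ ≤ u₁ ∧ l₂ ≤ x₂ ∧ x₂ ≤ u₂ ∧ p = (x₁, x₂, x₁ * x₂)} := by
  apply Set.Subset.antisymm
  · rintro ⟨x, y, w⟩ ⟨a1, a2, a3, a4, a5, a6, a7, a8⟩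
    simp only at a1 a2 a3 a4 a5 a6 a7 a8
    rcases h₁.eq_or_lt with rfl | k₁
    · apply subset_convexHull
      have hx : x = l₁ := le_antisymm a2 a1
      subst hx
      refine ⟨x, y, a1, a2, a3, a4, ?_⟩
      have : w = x * y := by linarith
      rw [this]
    rcases h₂.eq_or_lt with rfl | k₂
    · apply subset_convexHull
      have hy : y = l₂ := le_antisymm a4 a3
      subst hy
      refine ⟨x, y, a1, a2, a3, a4, ?_⟩
      have : w = x * y := by linarith
      rw [this]
    have hD : 0 < (u₁ - l₁) * (u₂ - l₂) := mul_pos (by linarith) (by linarith)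
    have e1 : u₁ - l₁ ≠ 0 := by linarith
    have e2 : u₂ - l₂ ≠ 0 := by linarith
    set S := {p : ℝ × ℝ × ℝ | ∃ x₁ x₂ : ℝ,
      l₁ ≤ x₁ ∧ x₁ ≤ u₁ ∧ l₂ ≤ x₂ ∧ x₂ ≤ u₂ ∧ p = (x₁, x₂, x₁ * x₂)} with hS
    let c : Fin 4 → ℝ := ![
      (w - l₂ * x - l₁ * y + l₁ * l₂) / ((u₁ - l₁) * (u₂ - l₂)),
      (w - u₂ * x - u₁ * y + u₁ * u₂) / ((u₁ - l₁) * (u₂ - l₂)),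
      (u₂ * x + l₁ * y - l₁ * u₂ - w) / ((u₁ - l₁) * (u₂ - l₂)),
      (l₂ * x + u₁ * y - u₁ * l₂ - w) / ((u₁ - l₁) * (u₂ - l₂))]
    let z : Fin 4 → ℝ × ℝ × ℝ := ![(u₁, u₂, u₁ * u₂), (l₁, l₂, l₁ * l₂),
      (u₁, l₂, u₁ * l₂), (l₁, u₂, l₁ * u₂)]
    have key : ∑ i, c i • z i ∈ convexHull ℝ S := by
      apply (convex_convexHull ℝ S).sum_mem
      · intro i _
        fin_cases i <;> exact div_nonneg (by linarith) hD.le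
      · simp only [Fin.sum_univ_four, c, Matrix.cons_val]
        field_simp
        ring
      · intro i _
        apply subset_convexHull
        fin_cases i
        · exact ⟨u₁, u₂, h₁, le_rfl, h₂, le_rfl, rfl⟩
        · exact ⟨l₁, l₂, le_rfl, h₁, le_rfl, h₂, rfl⟩
        · exact ⟨u₁, l₂, h₁, le_rfl, le_rfl, h₂, rfl⟩
        · exact ⟨l₁, u₂, le_rfl, h₁, h₂, le_rfl, rfl⟩
    convert key using 1
    simp only [Fin.sum_univ_four, c, z, Matrix.cons_val, Prod.smul_mk, Prod.mk_add_mk, smul_eq_mul]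
    refine Prod.ext ?_ (Prod.ext ?_ ?_) <;> simp only <;> field_simp <;> ring
  · apply convexHull_min
    · rintro _ ⟨x, y, a1, a2, a3, a4, rfl⟩
      refine ⟨a1, a2, a3, a4, ?_, ?_, ?_, ?_⟩ <;> simp only
      · nlinarith [mul_nonneg (sub_nonneg.2 a2) (sub_nonneg.2 a4)]
      · nlinarith [mul_nonneg (sub_nonneg.2 a1) (sub_nonneg.2 a3)]
      · nlinarith [mul_nonneg (sub_nonneg.2 a1) (sub_nonneg.2 a4)]
      · nlinarith [mul_nonneg (sub_nonneg.2 a2) (sub_nonneg.2 a3)]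
    · rintro ⟨x, y, w⟩ ⟨a1, a2, a3, a4, a5, a6, a7, a8⟩ ⟨x', y', w'⟩
        ⟨b1, b2, b3, b4, b5, b6, b7, b8⟩ s t hs ht hst
      obtain rfl : t = 1 - s := by linarith
      simp only at a1 a2 a3 a4 a5 a6 a7 a8 b1 b2 b3 b4 b5 b6 b7 b8
      simp only [Set.mem_setOf_eq, Prod.smul_mk, Prod.mk_add_mk, smul_eq_mul]
      refine ⟨?_, ?_, ?_, ?_, ?_, ?_, ?_, ?_⟩
      · linarith [mul_le_mul_of_nonneg_left a1 hs, mul_le_mul_of_nonneg_left b1 ht]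
      · linarith [mul_le_mul_of_nonneg_left a2 hs, mul_le_mul_of_nonneg_left b2 ht]
      · linarith [mul_le_mul_of_nonneg_left a3 hs, mul_le_mul_of_nonneg_left b3 ht]
      · linarith [mul_le_mul_of_nonneg_left a4 hs, mul_le_mul_of_nonneg_left b4 ht]
      · linarith [mul_le_mul_of_nonneg_left a5 hs, mul_le_mul_of_nonneg_left b5 ht]
      · linarith [mul_le_mul_of_nonneg_left a6 hs, mul_le_mul_of_nonneg_left b6 ht]
      · linarith [mul_le_mul_of_nonneg_left a7 hs, mul_le_mul_of_nonneg_left b7 ht]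
      · linarith [mul_le_mul_of_nonneg_left a8 hs, mul_le_mul_of_nonneg_left b8 ht]
end

section
/- Equivalence of the McCormick formulation and the vertex (lambda) formulation for a bilinear term with a single partition: let ℓ₁ ≤ u₁ and ℓ₂ ≤ u₂ be real numbers. Then the polytope M = {(x₁,x₂,w) ∈ ℝ³ : ℓ₁ ≤ x₁ ≤ u₁, ℓ₂ ≤ x₂ ≤ u₂, w ≥ u₂x₁ + u₁x₂ − u₁u₂, w ≥ ℓ₂x₁ + ℓ₁x₂ − ℓ₁ℓ₂, w ≤ u₂x₁ + ℓ₁x₂ − ℓ₁u₂, w ≤ ℓ₂x₁ + u₁x₂ − u₁ℓ₂} equals the convex hull (over ℝ) of the four lifted corner points {(ℓ₁,ℓ₂,ℓ₁ℓ₂), (ℓ₁,u₂,ℓ₁u₂), (u₁,ℓ₂,u₁ℓ₂), (u₁,u₂,u₁u₂)}. -/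
lemma exists_interp (l u x : ℝ) (h1 : l ≤ x) (h2 : x ≤ u) :
    ∃ a b : ℝ, 0 ≤ a ∧ 0 ≤ b ∧ a + b = 1 ∧ a * l + b * u = x := by
  have h : x ∈ segment ℝ l u := by
    rw [segment_eq_Icc (h1.trans h2)]
    exact ⟨h1, h2⟩
  obtain ⟨a, b, ha, hb, hab, e⟩ := h
  exact ⟨a, b, ha, hb, hab, by simpa using e⟩

lemma mem_hull_of_weights (s : Set (ℝ × ℝ × ℝ)) (p q r t z : ℝ × ℝ × ℝ)
    (hp : p ∈ s) (hq : q ∈ s) (hr : r ∈ s) (ht : t ∈ s)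
    (a b c d : ℝ) (ha : 0 ≤ a) (hb : 0 ≤ b) (hc : 0 ≤ c) (hd : 0 ≤ d)
    (h : a + b + c + d = 1) (hz : a • p + b • q + c • r + d • t = z) :
    z ∈ convexHull ℝ s := by
  have := (convex_convexHull ℝ s).sum_mem (t := Finset.univ) (w := ![a, b, c, d])
    (z := ![p, q, r, t])
    (by intro i _; fin_cases i <;> simpa)
    (by simpa [Fin.sum_univ_four] using h)
    (by intro i _; fin_cases i <;> exact subset_convexHull ℝ s (by simpa))
  rw [← hz]
  simpa [Fin.sum_univ_four] using this

/-- The McCormick relaxation polytope equals the convex hull of the four lifted corner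
points of the box `[l₁, u₁] × [l₂, u₂]` (vertex / lambda formulation). -/
theorem mccormick_eq_convexHull_corners (l₁ u₁ l₂ u₂ : ℝ) (h₁ : l₁ ≤ u₁) (h₂ : l₂ ≤ u₂) :
    {p : ℝ × ℝ × ℝ | l₁ ≤ p.1 ∧ p.1 ≤ u₁ ∧ l₂ ≤ p.2.1 ∧ p.2.1 ≤ u₂ ∧
      u₂ * p.1 + u₁ * p.2.1 - u₁ * u₂ ≤ p.2.2 ∧
      l₂ * p.1 + l₁ * p.2.1 - l₁ * l₂ ≤ p.2.2 ∧
      p.2.2 ≤ u₂ * p.1 + l₁ * p.2.1 - l₁ * u₂ ∧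
      p.2.2 ≤ l₂ * p.1 + u₁ * p.2.1 - u₁ * l₂} =
    convexHull ℝ ({(l₁, l₂, l₁ * l₂), (l₁, u₂, l₁ * u₂),
      (u₁, l₂, u₁ * l₂), (u₁, u₂, u₁ * u₂)} : Set (ℝ × ℝ × ℝ)) := by
  apply Set.Subset.antisymm
  · rintro ⟨x, y, w⟩ ⟨a1, a2, a3, a4, a5, a6, a7, a8⟩
    simp only at a1 a2 a3 a4 a5 a6 a7 a8
    suffices H : ∃ a b c d : ℝ, 0 ≤ a ∧ 0 ≤ b ∧ 0 ≤ c ∧ 0 ≤ d ∧ a + b + c + d = 1 ∧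
        a * l₁ + b * l₁ + c * u₁ + d * u₁ = x ∧ a * l₂ + b * u₂ + c * l₂ + d * u₂ = y ∧
        a * (l₁ * l₂) + b * (l₁ * u₂) + c * (u₁ * l₂) + d * (u₁ * u₂) = w by
      obtain ⟨a, b, c, d, ha, hb, hc, hd, h, e1, e2, e3⟩ := H
      refine mem_hull_of_weights _ (l₁, l₂, l₁ * l₂) (l₁, u₂, l₁ * u₂)
        (u₁, l₂, u₁ * l₂) (u₁, u₂, u₁ * u₂) _ (by simp) (by simp) (by simp) (by simp)
        a b c d ha hb hc hd h ?_
      simp [e1, e2, e3]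
    rcases h₁.eq_or_lt with rfl | k1
    · obtain ⟨a, b, ha, hb, hab, e⟩ := exists_interp _ _ _ a3 a4
      have hx : x = l₁ := le_antisymm a2 a1
      subst hx
      refine ⟨a, b, 0, 0, ha, hb, le_rfl, le_rfl, by linarith, ?_, by linarith, ?_⟩
      · linear_combination x * hab
      · have : w = x * y := by linarith
        rw [this]; linear_combination x * e
    rcases h₂.eq_or_lt with rfl | k2
    · obtain ⟨a, b, ha, hb, hab, e⟩ := exists_interp _ _ _ a1 a2
      have hy : y = l₂ := le_antisymm a4 a3
      subst hy
      refine ⟨a, 0, b, 0, ha, le_rfl, hb, le_rfl, by linarith, by linarith, ?_, ?_⟩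
      · linear_combination y * hab
      · have : w = x * y := by linarith
        rw [this]; linear_combination y * e
    have p1 : 0 < u₁ - l₁ := sub_pos.2 k1
    have p2 : 0 < u₂ - l₂ := sub_pos.2 k2
    have hD := mul_pos p1 p2
    refine ⟨(w - u₂ * x - u₁ * y + u₁ * u₂) / ((u₁ - l₁) * (u₂ - l₂)),
      (l₂ * x + u₁ * y - u₁ * l₂ - w) / ((u₁ - l₁) * (u₂ - l₂)),
      (u₂ * x + l₁ * y - l₁ * u₂ - w) / ((u₁ - l₁) * (u₂ - l₂)),
      (w - l₂ * x - l₁ * y + l₁ * l₂) / ((u₁ - l₁) * (u₂ - l₂)),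
      div_nonneg (by linarith) hD.le, div_nonneg (by linarith) hD.le,
      div_nonneg (by linarith) hD.le, div_nonneg (by linarith) hD.le, ?_, ?_, ?_, ?_⟩
    all_goals
      have := p1.ne'
      have := p2.ne'
      field_simp
      ring
  · apply convexHull_min
    · rintro p (rfl | rfl | rfl | rfl) <;>
        refine ⟨?_, ?_, ?_, ?_, ?_, ?_, ?_, ?_⟩ <;>
        nlinarith [mul_nonneg (sub_nonneg.2 h₁) (sub_nonneg.2 h₂)]
    · rintro ⟨x, y, w⟩ ⟨a1, a2, a3, a4, a5, a6, a7, a8⟩ ⟨x', y', w'⟩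
        ⟨b1, b2, b3, b4, b5, b6, b7, b8⟩ a b ha hb hab
      simp only at a1 a2 a3 a4 a5 a6 a7 a8 b1 b2 b3 b4 b5 b6 b7 b8
      obtain rfl : b = 1 - a := by linarith
      refine ⟨?_, ?_, ?_, ?_, ?_, ?_, ?_, ?_⟩ <;>
        simp only [Prod.smul_mk, Prod.mk_add_mk, smul_eq_mul]
      · nlinarith [mul_le_mul_of_nonneg_left a1 ha, mul_le_mul_of_nonneg_left b1 hb]
      · nlinarith [mul_le_mul_of_nonneg_left a2 ha, mul_le_mul_of_nonneg_left b2 hb]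
      · nlinarith [mul_le_mul_of_nonneg_left a3 ha, mul_le_mul_of_nonneg_left b3 hb]
      · nlinarith [mul_le_mul_of_nonneg_left a4 ha, mul_le_mul_of_nonneg_left b4 hb]
      · nlinarith [mul_le_mul_of_nonneg_left a5 ha, mul_le_mul_of_nonneg_left b5 hb]
      · nlinarith [mul_le_mul_of_nonneg_left a6 ha, mul_le_mul_of_nonneg_left b6 hb]
      · nlinarith [mul_le_mul_of_nonneg_left a7 ha, mul_le_mul_of_nonneg_left b7 hb]
      · nlinarith [mul_le_mul_of_nonneg_left a8 ha, mul_le_mul_of_nonneg_left b8 hb]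
end

section
/- Vertex characterization of the convex hull of the graph of a multilinear term (Rikun): let n ≥ 1, let ℓ, u : Fin n → ℝ with ℓ i ≤ u i for all i, and let φ(x) = ∏ᵢ xᵢ. Then the convex hull (over ℝ) of the set X = {(x, φ(x)) ∈ ℝⁿ × ℝ : ℓ i ≤ x i ≤ u i for all i} equals the convex hull of the finite set of lifted vertices {(v, φ(v)) : v ∈ ℝⁿ, v i ∈ {ℓ i, u i} for all i}. -/
theorem rikun_aux (n : ℕ) (l u : Fin n → ℝ) (hlu : ∀ i, l i ≤ u i) (s : Finset (Fin n)) :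
    ∀ x : Fin n → ℝ, (∀ i, l i ≤ x i ∧ x i ≤ u i) → (∀ i, i ∉ s → x i = l i ∨ x i = u i) →
    ((x, ∏ i, x i) : (Fin n → ℝ) × ℝ) ∈ convexHull ℝ {p : (Fin n → ℝ) × ℝ |
        ∃ v : Fin n → ℝ, (∀ i, v i = l i ∨ v i = u i) ∧ p = (v, ∏ i, v i)} := by
  induction s using Finset.induction_on with
  | empty =>
    intro x _ h
    exact subset_convexHull ℝ _ ⟨x, fun i => h i (by simp), rfl⟩
  | insert a s _ ih =>
    intro x hx h
    have key : ∀ c : ℝ, (c = l a ∨ c = u a) →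
        ((Function.update x a c, ∏ i, Function.update x a c i) : (Fin n → ℝ) × ℝ) ∈
        convexHull ℝ {p : (Fin n → ℝ) × ℝ |
        ∃ v : Fin n → ℝ, (∀ i, v i = l i ∨ v i = u i) ∧ p = (v, ∏ i, v i)} := by
      intro c hc
      apply ih
      · intro i
        by_cases hi : i = a
        · subst hi
          rw [Function.update_self]
          rcases hc with rfl | rfl
          · exact ⟨le_rfl, hlu i⟩
          · exact ⟨hlu i, le_rfl⟩
        · rw [Function.update_of_ne hi]
          exact hx i
      · intro i his
        by_cases hi : i = a
        · subst hi
          rw [Function.update_self]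
          exact hc
        · rw [Function.update_of_ne hi]
          exact h i (by simp [hi, his])
    have hseg : x a ∈ segment ℝ (l a) (u a) := by
      rw [segment_eq_Icc (hlu a)]
      exact hx a
    obtain ⟨α, β, hα, hβ, hab, hxa⟩ := hseg
    have := convex_convexHull ℝ _ (key (l a) (Or.inl rfl)) (key (u a) (Or.inr rfl)) hα hβ hab
    convert this using 1
    simp only [smul_eq_mul] at hxa
    ext i
    · by_cases hi : i = a
      · subst hi
        simp [hxa]
      · simp [Function.update_of_ne hi, ← add_mul, hab]
    · have hp : ∏ i, x i = x a * ∏ i ∈ Finset.univ \ {a}, x i := by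
        rw [← Finset.prod_update_of_mem (Finset.mem_univ a), Function.update_eq_self]
      simp only [Prod.snd_add, Prod.smul_snd, smul_eq_mul,
        Finset.prod_update_of_mem (Finset.mem_univ a)]
      rw [hp, ← hxa]
      ring


/-- Rikun's theorem: the convex hull of the graph of a multilinear term `φ(x) = ∏ i, x i`
over the box `[ℓ, u]` equals the convex hull of the finite set of lifted vertices of the
box. -/
theorem convexHull_multilinear_graph_eq_convexHull_vertices
    (n : ℕ) (hn : 1 ≤ n) (l u : Fin n → ℝ) (hlu : ∀ i, l i ≤ u i) :
    convexHull ℝ {p : (Fin n → ℝ) × ℝ |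
        ∃ x : Fin n → ℝ, (∀ i, l i ≤ x i ∧ x i ≤ u i) ∧ p = (x, ∏ i, x i)} =
    convexHull ℝ {p : (Fin n → ℝ) × ℝ |
        ∃ v : Fin n → ℝ, (∀ i, v i = l i ∨ v i = u i) ∧ p = (v, ∏ i, v i)} := by
  apply Set.Subset.antisymm
  · apply convexHull_min _ (convex_convexHull ℝ _)
    rintro p ⟨x, hx, rfl⟩
    exact rikun_aux n l u hlu Finset.univ x hx (fun i hi => absurd (Finset.mem_univ i) hi)
  · apply convexHull_mono
    rintro p ⟨v, hv, rfl⟩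
    refine ⟨v, fun i => ?_, rfl⟩
    rcases hv i with h | h
    · rw [h]; exact ⟨le_rfl, hlu i⟩
    · rw [h]; exact ⟨hlu i, le_rfl⟩
end

section
/- A multilinear term attains its extreme values over a box at vertices: let n ≥ 1, let ℓ, u : Fin n → ℝ with ℓ i ≤ u i for all i, and let φ(x) = ∏ᵢ xᵢ. Then for every x ∈ ℝⁿ with ℓ i ≤ x i ≤ u i for all i, there exist points v and v' with v i, v' i ∈ {ℓ i, u i} for all i such that φ(v) ≤ φ(x) ≤ φ(v'). -/
lemma vertex_aux (n : ℕ) : ∀ (c : ℝ) (l u x : Fin n → ℝ), (∀ i, l i ≤ x i ∧ x i ≤ u i) →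
    ∃ v : Fin n → ℝ, (∀ i, v i = l i ∨ v i = u i) ∧ c * (∏ i, v i) ≤ c * ∏ i, x i := by
  induction n with
  | zero => intro c l u x _; exact ⟨l, fun i => Or.inl rfl, by simp⟩
  | succ n ih =>
    intro c l u x hx
    obtain ⟨t, ht, hle⟩ : ∃ t : ℝ, (t = l 0 ∨ t = u 0) ∧
        (c * ∏ i : Fin n, x i.succ) * t ≤ (c * ∏ i : Fin n, x i.succ) * x 0 := by
      rcases le_total 0 (c * ∏ i : Fin n, x i.succ) with h | h
      · exact ⟨l 0, Or.inl rfl, mul_le_mul_of_nonneg_left (hx 0).1 h⟩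
      · exact ⟨u 0, Or.inr rfl, mul_le_mul_of_nonpos_left (hx 0).2 h⟩
    obtain ⟨w, hw, hwle⟩ := ih (c * t) (fun i => l i.succ) (fun i => u i.succ)
      (fun i => x i.succ) (fun i => hx i.succ)
    refine ⟨Fin.cons t w, fun i => ?_, ?_⟩
    · refine Fin.cases ?_ (fun j => ?_) i
      · simpa using ht
      · simpa using hw j
    · rw [Fin.prod_univ_succ, Fin.prod_univ_succ]
      simp only [Fin.cons_zero, Fin.cons_succ]
      linarith

/-- A multilinear term attains its extreme values over a box at vertices of the box. -/
theorem multilinear_extremes_at_vertices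
    (n : ℕ) (hn : 1 ≤ n) (l u : Fin n → ℝ) (hlu : ∀ i, l i ≤ u i)
    (x : Fin n → ℝ) (hx : ∀ i, l i ≤ x i ∧ x i ≤ u i) :
    ∃ v v' : Fin n → ℝ,
      (∀ i, v i = l i ∨ v i = u i) ∧ (∀ i, v' i = l i ∨ v' i = u i) ∧
      (∏ i, v i) ≤ (∏ i, x i) ∧ (∏ i, x i) ≤ (∏ i, v' i) := by
  obtain ⟨v, hv, h1⟩ := vertex_aux n 1 l u x hx
  obtain ⟨v', hv', h2⟩ := vertex_aux n (-1) l u x hx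
  exact ⟨v, v', hv, hv', by linarith, by linarith⟩
end

section
/- The lifted grid points of any discretization span the same convex hull as the graph of the multilinear term: let n ≥ 1 and ℓ, u : Fin n → ℝ with ℓ i ≤ u i for all i, let φ(x) = ∏ᵢ xᵢ, and for each i let Sᵢ be a finite subset of the interval [ℓ i, u i] containing both ℓ i and u i. Let S = ∏ᵢ Sᵢ be the finite grid of discretization points. Then the convex hull (over ℝ) of the finite set {(v, φ(v)) : v ∈ S} equals the convex hull of X = {(x, φ(x)) : ℓ i ≤ x i ≤ u i for all i}. -/
/-- The lifted grid points of any discretization of the box span the same convex hull as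
the graph of the multilinear term over the box. -/
theorem convexHull_lifted_grid_eq_convexHull_graph
    (n : ℕ) (hn : 1 ≤ n) (l u : Fin n → ℝ) (hlu : ∀ i, l i ≤ u i)
    (S : Fin n → Finset ℝ)
    (hS : ∀ i, ∀ r ∈ S i, l i ≤ r ∧ r ≤ u i)
    (hSl : ∀ i, l i ∈ S i) (hSu : ∀ i, u i ∈ S i) :
    convexHull ℝ {p : (Fin n → ℝ) × ℝ |
        ∃ v : Fin n → ℝ, (∀ i, v i ∈ S i) ∧ p = (v, ∏ i, v i)} =
    convexHull ℝ {p : (Fin n → ℝ) × ℝ |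
        ∃ x : Fin n → ℝ, (∀ i, l i ≤ x i ∧ x i ≤ u i) ∧ p = (x, ∏ i, x i)} := by
  apply Set.Subset.antisymm
  · apply convexHull_mono
    rintro p ⟨v, hv, rfl⟩
    exact ⟨v, fun i => hS i _ (hv i), rfl⟩
  · apply convexHull_min _ (convex_convexHull ℝ _)
    rintro p ⟨x, hx, rfl⟩
    -- coordinates outside `T` already lie in the grid; induct on `T`
    have key : ∀ T : Finset (Fin n), ∀ x : Fin n → ℝ, (∀ i, l i ≤ x i ∧ x i ≤ u i) →
        (∀ i, i ∉ T → x i ∈ S i) →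
        (x, ∏ i, x i) ∈ convexHull ℝ {p : (Fin n → ℝ) × ℝ |
          ∃ v : Fin n → ℝ, (∀ i, v i ∈ S i) ∧ p = (v, ∏ i, v i)} := by
      intro T
      induction T using Finset.induction_on with
      | empty =>
        intro x _ hxS
        exact subset_convexHull ℝ _ ⟨x, fun i => hxS i (by simp), rfl⟩
      | insert j T hj ih =>
        intro x hx hxS
        have step : ∀ c ∈ S j, (Function.update x j c, ∏ i, Function.update x j c i) ∈
            convexHull ℝ {p : (Fin n → ℝ) × ℝ |
              ∃ v : Fin n → ℝ, (∀ i, v i ∈ S i) ∧ p = (v, ∏ i, v i)} := by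
          intro c hc
          apply ih
          · intro i
            by_cases h : i = j
            · subst h
              simpa using hS i c hc
            · simpa [Function.update_of_ne h] using hx i
          · intro i hi
            by_cases h : i = j
            · subst h
              simpa using hc
            · rw [Function.update_of_ne h]
              exact hxS i (by simp [h, hi])
        have hseg : x j ∈ segment ℝ (l j) (u j) := by
          rw [segment_eq_Icc (hlu j)]
          exact hx j
        obtain ⟨a, b, ha, hb, hab, hxj⟩ := hseg
        have hmem := (convex_convexHull ℝ _) (step _ (hSl j)) (step _ (hSu j)) ha hb hab
        convert hmem using 1
        have hp : ∏ i, x i = x j * ∏ i ∈ Finset.univ \ {j}, x i := by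
          have := Finset.prod_update_of_mem (Finset.mem_univ j) x (x j)
          rwa [Function.update_eq_self] at this
        simp only [smul_eq_mul] at hxj
        ext i
        · by_cases h : i = j
          · subst h
            simp [hxj]
          · simp only [Prod.fst_add, Prod.smul_fst, Pi.add_apply, Pi.smul_apply,
              Function.update_of_ne h, smul_eq_mul]
            rw [← add_mul, hab, one_mul]
        · simp only [Prod.snd_add, Prod.smul_snd, smul_eq_mul,
            Finset.prod_update_of_mem (Finset.mem_univ j)]
          rw [hp, ← hxj]
          ring
    exact key Finset.univ x hx (fun i hi => absurd (Finset.mem_univ i) hi)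
end

section
/- The LP relaxation of the SOS-2 constraints in the piecewise polyhedral relaxation (PPR) is always satisfiable: let n ≥ 1 and, for each i ∈ Fin n, let ℓ i = s(i,1) < s(i,2) < ⋯ < s(i,nᵢ) = u i be discretization points with nᵢ ≥ 2, let S = ∏ᵢ {s(i,1),…,s(i,nᵢ)} be the grid, and let λ : S → ℝ be nonnegative with ∑_{v ∈ S} λ(v) = 1. For r ∈ ℝ let λ(μᵢ(r)) = ∑ {λ(v) : v ∈ S, vᵢ = r}. Then for each i there exist real numbers y(i,1), …, y(i,nᵢ−1) ∈ [0,1] with ∑_{k=1}^{nᵢ−1} y(i,k) = 1 such that λ(μᵢ(s(i,1))) ≤ y(i,1), λ(μᵢ(s(i,k))) ≤ y(i,k−1) + y(i,k) for every k with 2 ≤ k ≤ nᵢ−1, and λ(μᵢ(s(i,nᵢ))) ≤ y(i,nᵢ−1). -/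
/-- The LP relaxation of the SOS-2 constraints in the piecewise polyhedral relaxation
(PPR) of a multilinear term is always satisfiable.  Grid points are indexed (0-based) by
`σ : Fin n → ℕ` with `σ i < m i`; the grid point of `σ` is `fun i => s i (σ i)`, and
`λ(μᵢ(r))` is the sum of the multipliers over grid points whose `i`-th coordinate
equals `r`. -/
theorem ppr_sos2_lp_relaxation_satisfiable
    (n : ℕ) (hn : 1 ≤ n) (l u : Fin n → ℝ)
    (m : Fin n → ℕ) (hm : ∀ i, 2 ≤ m i)
    (s : Fin n → ℕ → ℝ)
    (hmono : ∀ i, ∀ k, k + 1 < m i → s i k < s i (k + 1))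
    (hsl : ∀ i, s i 0 = l i) (hsu : ∀ i, s i (m i - 1) = u i)
    (lam : (Fin n → ℕ) → ℝ)
    (hnn : ∀ σ ∈ Fintype.piFinset (fun i => Finset.range (m i)), 0 ≤ lam σ)
    (hsum : ∑ σ ∈ Fintype.piFinset (fun i => Finset.range (m i)), lam σ = 1) :
    ∀ i : Fin n, ∃ y : ℕ → ℝ,
      (∀ k, k < m i - 1 → 0 ≤ y k ∧ y k ≤ 1) ∧
      (∑ k ∈ Finset.range (m i - 1), y k = 1) ∧
      (∑ σ ∈ (Fintype.piFinset (fun i' => Finset.range (m i'))).filter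
          (fun σ => s i (σ i) = s i 0), lam σ) ≤ y 0 ∧
      (∀ k, 1 ≤ k → k ≤ m i - 2 →
        (∑ σ ∈ (Fintype.piFinset (fun i' => Finset.range (m i'))).filter
            (fun σ => s i (σ i) = s i k), lam σ) ≤ y (k - 1) + y k) ∧
      (∑ σ ∈ (Fintype.piFinset (fun i' => Finset.range (m i'))).filter
          (fun σ => s i (σ i) = s i (m i - 1)), lam σ) ≤ y (m i - 2) := by
  intro i
  have hM := hm i
  have hlt : ∀ a b, a < b → b < m i → s i a < s i b := by
    intro a b hab
    induction b, hab using Nat.le_induction with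
    | base => intro h; exact hmono i a h
    | succ b hb ih => intro h; exact (ih (by omega)).trans (hmono i b h)
  have hinj : ∀ a b, a < m i → b < m i → s i a = s i b → a = b := by
    intro a b ha hb h
    rcases lt_trichotomy a b with h1 | h1 | h1
    · exact absurd h (hlt a b h1 hb).ne
    · exact h1
    · exact absurd h (hlt b a h1 ha).ne'
  obtain ⟨p, hp⟩ : ∃ p : ℕ → ℝ, ∀ k, (∑ σ ∈ (Fintype.piFinset
      (fun i' => Finset.range (m i'))).filter (fun σ => s i (σ i) = s i k), lam σ) = p k :=
    ⟨_, fun k => rfl⟩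
  have hp0 : ∀ k, 0 ≤ p k := by
    intro k
    rw [← hp k]
    exact Finset.sum_nonneg fun σ hσ => hnn σ (Finset.mem_filter.1 hσ).1
  have hp1 : ∑ k ∈ Finset.range (m i), p k = 1 := by
    rw [← hsum, ← Finset.sum_fiberwise_of_maps_to (t := Finset.range (m i))
      (g := fun σ : Fin n → ℕ => σ i)
      (fun σ hσ => Fintype.mem_piFinset.1 hσ i)]
    refine Finset.sum_congr rfl fun k hk => ?_
    rw [← hp k]
    refine Finset.sum_congr (Finset.filter_congr fun σ hσ => ?_) fun _ _ => rfl
    have h1 := Fintype.mem_piFinset.1 hσ i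
    exact ⟨hinj _ _ (Finset.mem_range.1 h1) (Finset.mem_range.1 hk), fun h => by rw [h]⟩
  simp only [hp]
  obtain ⟨M, hMe⟩ : ∃ M, m i = M + 2 := ⟨m i - 2, by omega⟩
  have e1 : M + 2 - 1 = M + 1 := by omega
  have e2 : M + 2 - 2 = M := by omega
  rw [hMe] at hp1 ⊢
  rw [e1, e2]
  have hy0 : ∀ k, p k ≤ p k + if k = M then p (M + 1) else 0 := by
    intro k
    have := hp0 (M + 1)
    split_ifs <;> linarith
  have hys : ∑ k ∈ Finset.range (M + 1), (p k + if k = M then p (M + 1) else 0) = 1 := by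
    rw [Finset.sum_add_distrib, Finset.sum_ite_eq', if_pos (by simp), ← hp1,
      Finset.sum_range_succ _ (M + 1)]
  refine ⟨fun k => p k + if k = M then p (M + 1) else 0, ?_, hys, hy0 0, ?_, ?_⟩
  · intro k hk
    refine ⟨(hp0 k).trans (hy0 k), ?_⟩
    rw [← hys]
    exact Finset.single_le_sum (f := fun k => p k + if k = M then p (M + 1) else 0)
      (fun j _ => (hp0 j).trans (hy0 j)) (Finset.mem_range.2 hk)
  · intro k _ _
    have h1 := (hp0 (k - 1)).trans (hy0 (k - 1))
    have h2 := hy0 k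
    dsimp only
    linarith
  · have := hp0 M
    simp only [if_true]
    linarith
end

section
/- With binary indicator variables, the PPR constraints force the multipliers to be supported on the vertices of the active partition, so that any feasible point lies in the convex hull of the active sub-box's lifted vertices: let n ≥ 1 and, for each i ∈ Fin n, let ℓ i = s(i,1) < ⋯ < s(i,nᵢ) = u i be discretization points with nᵢ ≥ 2, and let S = ∏ᵢ {s(i,1),…,s(i,nᵢ)} be the grid. Suppose λ : S → ℝ is nonnegative with ∑_{v∈S} λ(v) = 1, and for each i suppose y(i,·) ∈ {0,1}^{nᵢ−1} with ∑_k y(i,k) = 1 and active index kᵢ (i.e., y(i,kᵢ) = 1), such that λ(μᵢ(s(i,1))) ≤ y(i,1), λ(μᵢ(s(i,k))) ≤ y(i,k−1) + y(i,k) for 2 ≤ k ≤ nᵢ−1, and λ(μᵢ(s(i,nᵢ))) ≤ y(i,nᵢ−1). Then every grid point v ∈ S with λ(v) > 0 satisfies vᵢ ∈ {s(i,kᵢ), s(i,kᵢ+1)} for all i; consequently, with φ(x) = ∏ᵢ xᵢ, the point (∑_{v∈S} λ(v)·v, ∑_{v∈S} λ(v)·φ(v)) lies in the convex hull over ℝ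 of the lifted vertices {(v, φ(v)) : vᵢ ∈ {s(i,kᵢ), s(i,kᵢ+1)} for all i} of the active sub-box ∏ᵢ [s(i,kᵢ), s(i,kᵢ+1)]. -/
/-- With binary indicator variables, the SOS-2 constraints of the PPR force the
multipliers to be supported on the grid points whose coordinates are endpoints of the
active partition intervals; consequently the point represented by the multipliers lies in
the convex hull of the lifted vertices of the active sub-box.  Grid points are indexed
(0-based) by `σ : Fin n → ℕ` with `σ i < m i`; the grid point of `σ` is
`fun i => s i (σ i)`, and the active interval of variable `i` is
`[s i (k i), s i (k i + 1)]`. -/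
theorem ppr_binary_forces_active_partition
    (n : ℕ) (hn : 1 ≤ n) (l u : Fin n → ℝ)
    (m : Fin n → ℕ) (hm : ∀ i, 2 ≤ m i)
    (s : Fin n → ℕ → ℝ)
    (hmono : ∀ i, ∀ k', k' + 1 < m i → s i k' < s i (k' + 1))
    (hsl : ∀ i, s i 0 = l i) (hsu : ∀ i, s i (m i - 1) = u i)
    (lam : (Fin n → ℕ) → ℝ)
    (hnn : ∀ σ ∈ Fintype.piFinset (fun i => Finset.range (m i)), 0 ≤ lam σ)
    (hsum : ∑ σ ∈ Fintype.piFinset (fun i => Finset.range (m i)), lam σ = 1)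
    (y : Fin n → ℕ → ℝ)
    (hybin : ∀ i, ∀ k', k' < m i - 1 → y i k' = 0 ∨ y i k' = 1)
    (hysum : ∀ i, ∑ k' ∈ Finset.range (m i - 1), y i k' = 1)
    (k : Fin n → ℕ) (hk : ∀ i, k i < m i - 1) (hact : ∀ i, y i (k i) = 1)
    (hc1 : ∀ i, (∑ σ ∈ (Fintype.piFinset (fun i' => Finset.range (m i'))).filter
        (fun σ => s i (σ i) = s i 0), lam σ) ≤ y i 0)
    (hc2 : ∀ i, ∀ k', 1 ≤ k' → k' ≤ m i - 2 →
      (∑ σ ∈ (Fintype.piFinset (fun i' => Finset.range (m i'))).filter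
          (fun σ => s i (σ i) = s i k'), lam σ) ≤ y i (k' - 1) + y i k')
    (hc3 : ∀ i, (∑ σ ∈ (Fintype.piFinset (fun i' => Finset.range (m i'))).filter
        (fun σ => s i (σ i) = s i (m i - 1)), lam σ) ≤ y i (m i - 2)) :
    (∀ σ ∈ Fintype.piFinset (fun i => Finset.range (m i)), 0 < lam σ →
      ∀ i, s i (σ i) = s i (k i) ∨ s i (σ i) = s i (k i + 1)) ∧
    ((fun i => ∑ σ ∈ Fintype.piFinset (fun i' => Finset.range (m i')),
        lam σ * s i (σ i)),
      ∑ σ ∈ Fintype.piFinset (fun i' => Finset.range (m i')),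
        lam σ * ∏ i, s i (σ i)) ∈
      convexHull ℝ {p : (Fin n → ℝ) × ℝ |
        ∃ v : Fin n → ℝ, (∀ i, v i = s i (k i) ∨ v i = s i (k i + 1)) ∧
          p = (v, ∏ i, v i)} := by
  have hy0 : ∀ i j, j < m i - 1 → j ≠ k i → y i j = 0 := by
    intro i j hj hne
    rcases hybin i j hj with h | h
    · exact h
    · exfalso
      have hsub : ({j, k i} : Finset ℕ) ⊆ Finset.range (m i - 1) := by
        intro x hx
        simp only [Finset.mem_insert, Finset.mem_singleton] at hx
        rcases hx with rfl | rfl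
        · exact Finset.mem_range.2 hj
        · exact Finset.mem_range.2 (hk i)
      have hle := Finset.sum_le_sum_of_subset_of_nonneg (f := y i) hsub (by
        intro x hx _
        rcases hybin i x (Finset.mem_range.1 hx) with h' | h' <;> rw [h'] <;> norm_num)
      rw [Finset.sum_pair hne, hysum i, h, hact i] at hle
      norm_num at hle
  have hmain : ∀ σ ∈ Fintype.piFinset (fun i => Finset.range (m i)), 0 < lam σ →
      ∀ i, s i (σ i) = s i (k i) ∨ s i (σ i) = s i (k i + 1) := by
    intro σ hσ hpos i
    by_cases h1 : σ i = k i
    · left; rw [h1]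
    by_cases h2 : σ i = k i + 1
    · right; rw [h2]
    exfalso
    have hlt : σ i < m i := Finset.mem_range.1 (Fintype.mem_piFinset.1 hσ i)
    have hm2 := hm i
    have hki := hk i
    have hle : lam σ ≤ ∑ τ ∈ (Fintype.piFinset (fun i' => Finset.range (m i'))).filter
        (fun τ => s i (τ i) = s i (σ i)), lam τ :=
      Finset.single_le_sum (f := lam)
        (fun τ hτ => hnn τ (Finset.mem_filter.1 hτ).1)
        (Finset.mem_filter.2 ⟨hσ, rfl⟩)
    by_cases h0 : σ i = 0
    · rw [h0] at hle
      have := hc1 i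
      have := hy0 i 0 (by omega) (by omega)
      linarith
    by_cases h3 : σ i = m i - 1
    · rw [h3] at hle
      have := hc3 i
      have := hy0 i (m i - 2) (by omega) (by omega)
      linarith
    · have := hc2 i (σ i) (by omega) (by omega)
      have := hy0 i (σ i) (by omega) h1
      have := hy0 i (σ i - 1) (by omega) (by omega)
      linarith
  refine ⟨hmain, ?_⟩
  set G := Fintype.piFinset (fun i => Finset.range (m i)) with hG
  have hfil : ∀ f : (Fin n → ℕ) → ℝ,
      ∑ σ ∈ G.filter (fun σ => 0 < lam σ), lam σ * f σ = ∑ σ ∈ G, lam σ * f σ := by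
    intro f
    apply Finset.sum_filter_of_ne
    intro σ hσ hne
    exact lt_of_le_of_ne (hnn σ hσ) (fun h => hne (by rw [← h, zero_mul]))
  have hmem := (convex_convexHull ℝ {p : (Fin n → ℝ) × ℝ |
        ∃ v : Fin n → ℝ, (∀ i, v i = s i (k i) ∨ v i = s i (k i + 1)) ∧
          p = (v, ∏ i, v i)}).sum_mem (t := G.filter (fun σ => 0 < lam σ)) (w := lam)
      (z := fun σ => ((fun i => s i (σ i)), ∏ i, s i (σ i)))
      (fun σ hσ => (Finset.mem_filter.1 hσ).2.le)
      (by simpa [hsum] using hfil (fun _ => 1))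
      (fun σ hσ => subset_convexHull ℝ _
        ⟨_, hmain σ (Finset.mem_filter.1 hσ).1 (Finset.mem_filter.1 hσ).2, rfl⟩)
  convert hmem using 1
  refine Prod.ext ?_ ?_
  · funext i
    rw [Prod.fst_sum, Finset.sum_apply]
    exact (hfil (fun σ => s i (σ i))).symm
  · rw [Prod.snd_sum]
    exact (hfil (fun σ => ∏ i, s i (σ i))).symm
end

section
/- The PPR is a valid relaxation of the graph of a multilinear term: let n ≥ 1 and, for each i ∈ Fin n, let ℓ i = s(i,1) < ⋯ < s(i,nᵢ) = u i be discretization points with nᵢ ≥ 2, and let φ(x) = ∏ᵢ xᵢ. Then for every x ∈ ℝⁿ with ℓ i ≤ x i ≤ u i for all i, there exist indices kᵢ ∈ {1,…,nᵢ−1} such that s(i,kᵢ) ≤ x i ≤ s(i,kᵢ+1) for all i, and the lifted point (x, φ(x)) lies in the convex hull over ℝ of the lifted vertices {(v, φ(v)) : v ∈ ℝⁿ, vᵢ ∈ {s(i,kᵢ), s(i,kᵢ+1)} for all i} of the sub-box ∏ᵢ [s(i,kᵢ), s(i,kᵢ+1)]. -/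
lemma exists_cell (s : ℕ → ℝ) (x : ℝ) (h0 : s 0 ≤ x) :
    ∀ N : ℕ, x ≤ s (N + 1) → ∃ k, k < N + 1 ∧ s k ≤ x ∧ x ≤ s (k + 1) := by
  intro N
  induction N with
  | zero => exact fun h => ⟨0, by omega, h0, h⟩
  | succ N ih =>
    intro h
    by_cases hx : x ≤ s (N + 1)
    · obtain ⟨k, hk, h1⟩ := ih hx
      exact ⟨k, by omega, h1⟩
    · exact ⟨N + 1, by omega, (not_le.mp hx).le, h⟩

lemma lifted_mem_hull (n : ℕ) (a b : Fin n → ℝ) (T : Finset (Fin n)) :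
    ∀ x : Fin n → ℝ, (∀ i, a i ≤ x i ∧ x i ≤ b i) → (∀ i, i ∉ T → x i = a i ∨ x i = b i) →
      (x, ∏ i, x i) ∈ convexHull ℝ {p : (Fin n → ℝ) × ℝ |
        ∃ v : Fin n → ℝ, (∀ i, v i = a i ∨ v i = b i) ∧ p = (v, ∏ i, v i)} := by
  induction T using Finset.induction_on with
  | empty =>
    intro x _ hv
    exact subset_convexHull ℝ _ ⟨x, fun i => hv i (by simp), rfl⟩
  | insert j T hj ih =>
    intro x hx hv
    have key : ∀ c, a j ≤ c → c ≤ b j → (c = a j ∨ c = b j) →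
        (Function.update x j c, ∏ i, Function.update x j c i) ∈
          convexHull ℝ {p : (Fin n → ℝ) × ℝ |
        ∃ v : Fin n → ℝ, (∀ i, v i = a i ∨ v i = b i) ∧ p = (v, ∏ i, v i)} := by
      intro c h1 h2 h3
      apply ih
      · intro i
        by_cases hi : i = j
        · subst hi; simpa using ⟨h1, h2⟩
        · simpa [hi] using hx i
      · intro i hT
        by_cases hi : i = j
        · subst hi; simpa using h3
        · simpa [hi] using hv i (by simp [hi, hT])
    have hab := (hx j).1.trans (hx j).2
    have hA := key (a j) le_rfl hab (Or.inl rfl)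
    have hB := key (b j) hab le_rfl (Or.inr rfl)
    have hseg : x j ∈ segment ℝ (a j) (b j) := by
      rw [segment_eq_Icc hab]; exact hx j
    obtain ⟨p, q, hp, hq, hpq, hxj⟩ := hseg
    have hc := (convex_convexHull ℝ _) hA hB hp hq hpq
    convert hc using 1
    simp only [smul_eq_mul] at hxj
    have hP : ∀ c, ∏ i, Function.update x j c i = c * ∏ i ∈ Finset.univ \ {j}, x i :=
      fun c => Finset.prod_update_of_mem (Finset.mem_univ j) x c
    ext i
    · by_cases hi : i = j
      · subst hi; simp [hxj]
      · simp [hi, ← add_mul, hpq]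
    · have hx' := hP (x j)
      rw [Function.update_eq_self] at hx'
      simp only [Prod.smul_mk, Prod.mk_add_mk, smul_eq_mul, hP, hx', ← hxj]
      ring

/-- The PPR is a valid relaxation of the graph of a multilinear term: every point of the
box lies in some sub-box of the partition, and its lifted point lies in the convex hull
of the lifted vertices of that sub-box.  Discretization points of variable `i` are
`s i 0 < s i 1 < ⋯ < s i (m i - 1)` (0-based), with `s i 0 = l i` and
`s i (m i - 1) = u i`. -/
theorem ppr_valid_relaxation
    (n : ℕ) (hn : 1 ≤ n) (l u : Fin n → ℝ)
    (m : Fin n → ℕ) (hm : ∀ i, 2 ≤ m i)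
    (s : Fin n → ℕ → ℝ)
    (hmono : ∀ i, ∀ k', k' + 1 < m i → s i k' < s i (k' + 1))
    (hsl : ∀ i, s i 0 = l i) (hsu : ∀ i, s i (m i - 1) = u i)
    (x : Fin n → ℝ) (hx : ∀ i, l i ≤ x i ∧ x i ≤ u i) :
    ∃ k : Fin n → ℕ, (∀ i, k i < m i - 1) ∧
      (∀ i, s i (k i) ≤ x i ∧ x i ≤ s i (k i + 1)) ∧
      (x, ∏ i, x i) ∈ convexHull ℝ {p : (Fin n → ℝ) × ℝ |
        ∃ v : Fin n → ℝ, (∀ i, v i = s i (k i) ∨ v i = s i (k i + 1)) ∧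
          p = (v, ∏ i, v i)} := by
  have hcell : ∀ i, ∃ k, k < m i - 1 ∧ s i k ≤ x i ∧ x i ≤ s i (k + 1) := by
    intro i
    have h2 := hm i
    obtain ⟨N, hN⟩ : ∃ N, m i - 1 = N + 1 := ⟨m i - 2, by omega⟩
    rw [hN]
    exact exists_cell (s i) (x i) (by rw [hsl]; exact (hx i).1) N
      (by rw [← hN, hsu]; exact (hx i).2)
  choose k hk hkx using hcell
  exact ⟨k, hk, hkx, lifted_mem_hull n (fun i => s i (k i)) (fun i => s i (k i + 1))
    Finset.univ x hkx (fun i hi => absurd (Finset.mem_univ i) hi)⟩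
end

section
/- Exactness of the MILP edge-based recovery formulation: let n ≥ 1 and ℓ, u : Fin n → ℝ with ℓ i < u i for all i, let φ(x) = ∏ᵢ xᵢ, let V = {v ∈ ℝⁿ : vᵢ ∈ {ℓ i, u i} for all i} be the set of vertices of the box, and let E be the set of (unordered) pairs of vertices that differ in exactly one coordinate. Suppose λ : V → ℝ is nonnegative with ∑_{v∈V} λ(v) = 1, and z : E → {0,1} satisfies ∑_{e∈E} z(e) = 1 and, for every v ∈ V, λ(v) ≤ ∑ {z(e) : e ∈ E, v is an endpoint of e}. Then the point x = ∑_{v∈V} λ(v)·v and the value w = ∑_{v∈V} λ(v)·φ(v) satisfy w = φ(x); that is, (x,w) lies on the graph of the multilinear term. -/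
open scoped Classical in
/-- Exactness of the MILP edge-based recovery formulation: if the vertex multipliers `lam`
form a convex combination which, via binary edge indicators `z` with exactly one active
edge and `lam v ≤ ∑_{e ∈ γ(v)} z e`, is supported on the endpoints of a single edge of
the box, then the recovered point `(x, w)` lies on the graph of the multilinear term.
Here `V` is the (finite) set of vertices of the box and `E` the (finite) set of unordered
pairs of vertices differing in exactly one coordinate. -/
theorem milp_edge_recovery_exact
    (n : ℕ) (hn : 1 ≤ n) (l u : Fin n → ℝ) (hlu : ∀ i, l i < u i)
    (V : Finset (Fin n → ℝ))
    (hV : ∀ v : Fin n → ℝ, v ∈ V ↔ ∀ i, v i = l i ∨ v i = u i)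
    (E : Finset (Sym2 (Fin n → ℝ)))
    (hE : ∀ e : Sym2 (Fin n → ℝ), e ∈ E ↔
      ∃ v w : Fin n → ℝ, (∀ i, v i = l i ∨ v i = u i) ∧
        (∀ i, w i = l i ∨ w i = u i) ∧ (∃! j, v j ≠ w j) ∧ e = s(v, w))
    (lam : (Fin n → ℝ) → ℝ)
    (hnn : ∀ v ∈ V, 0 ≤ lam v) (hsum : ∑ v ∈ V, lam v = 1)
    (z : Sym2 (Fin n → ℝ) → ℝ)
    (hzbin : ∀ e ∈ E, z e = 0 ∨ z e = 1)
    (hzsum : ∑ e ∈ E, z e = 1)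
    (hinc : ∀ v ∈ V, lam v ≤ ∑ e ∈ E.filter (fun e => v ∈ e), z e) :
    (∑ v ∈ V, lam v * ∏ i, v i) = ∏ i, (∑ v ∈ V, lam v • v) i := by
  obtain ⟨e0, he0, hz0⟩ : ∃ e ∈ E, z e = 1 := by
    by_contra! h
    have h0 : ∑ e ∈ E, z e = 0 :=
      Finset.sum_eq_zero fun e he => (hzbin e he).resolve_right (h e he)
    linarith
  have hznn : ∀ e ∈ E, 0 ≤ z e := by
    intro e he
    rcases hzbin e he with h | h <;> rw [h] <;> norm_num
  have hz : ∀ e ∈ E, e ≠ e0 → z e = 0 := by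
    have h1 := Finset.add_sum_erase E z he0
    have h2 : ∑ e ∈ E.erase e0, z e = 0 := by linarith
    rw [Finset.sum_eq_zero_iff_of_nonneg
      (fun e he => hznn e (Finset.mem_of_mem_erase he))] at h2
    exact fun e he hne => h2 e (Finset.mem_erase.2 ⟨hne, he⟩)
  obtain ⟨a, b, ha, hb, ⟨j, hj, hju⟩, rfl⟩ := (hE e0).1 he0
  have hab : a ≠ b := fun h => hj (by rw [h])
  have hlam : ∀ v ∈ V, v ∉ ({a, b} : Finset (Fin n → ℝ)) → lam v = 0 := by
    intro v hv hne
    have h1 := hinc v hv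
    have h2 : ∑ e ∈ E.filter (fun e => v ∈ e), z e = 0 := by
      apply Finset.sum_eq_zero
      intro e he
      rw [Finset.mem_filter] at he
      apply hz e he.1
      rintro rfl
      apply hne
      simpa using he.2
    linarith [hnn v hv]
  have hsub : ({a, b} : Finset (Fin n → ℝ)) ⊆ V := by
    intro v hv
    rw [Finset.mem_insert, Finset.mem_singleton] at hv
    rcases hv with rfl | rfl
    · exact (hV _).2 ha
    · exact (hV _).2 hb
  rw [← Finset.sum_subset hsub hlam, Finset.sum_pair hab] at hsum
  rw [← Finset.sum_subset hsub (fun v hv h => by rw [hlam v hv h, zero_mul]),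
    ← Finset.sum_subset hsub (fun v hv h => by rw [hlam v hv h, zero_smul]),
    Finset.sum_pair hab, Finset.sum_pair hab]
  have hoff : ∀ i, i ≠ j → b i = a i := by
    intro i hi
    by_contra h
    exact hi (hju i (Ne.symm h))
  have hb' : ∏ i ∈ Finset.univ.erase j, b i = ∏ i ∈ Finset.univ.erase j, a i :=
    Finset.prod_congr rfl fun i hi => hoff i (Finset.ne_of_mem_erase hi)
  have hc' : ∏ i ∈ Finset.univ.erase j, (lam a • a + lam b • b) i
      = ∏ i ∈ Finset.univ.erase j, a i := by
    refine Finset.prod_congr rfl fun i hi => ?_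
    simp only [Pi.add_apply, Pi.smul_apply, smul_eq_mul]
    rw [hoff i (Finset.ne_of_mem_erase hi), ← add_mul, hsum, one_mul]
  rw [← Finset.mul_prod_erase Finset.univ a (Finset.mem_univ j),
    ← Finset.mul_prod_erase Finset.univ b (Finset.mem_univ j),
    ← Finset.mul_prod_erase Finset.univ (lam a • a + lam b • b) (Finset.mem_univ j), hb', hc']
  simp only [Pi.add_apply, Pi.smul_apply, smul_eq_mul]
  ring
end
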